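/- arXiv:1404.2308 — 3 statements merged into one kernel-verified Lean document; each statement's English description precedes it below -/
import Mathlib

section
/- Let Λ > 1, α ∈ (0,1), and C'', D' > 0 be real constants, and let (n_l)_{l≥0} be a strictly increasing sequence of positive integers such that (n_0 + n_1 + … + n_{l−1})/n_l → 0 as l → ∞ (for instance n_l = 2^{c·2^l} for a constant c ≥ 1). Define the positive real numbers ε_l := D'·Λ^{−α·n_l} and m_l := C''·Λ^{−n_{l−1} + α·n_l} for l ≥ 1. Then the limit as l → ∞ of log(m_1·m_2·…·m_{l−1}) / (−log(m_l·ε_l)) exists and equals α. -/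
open Filter

/-- Computation of the limit appearing in the lower bound for the Hausdorff
dimension of the Cantor set of Newhouse parameters: with
`ε l = D' · Λ^(−α·n l)` and `m l = C'' · Λ^(−n (l−1) + α·n l)`, where `(n l)`
grows so fast that `(n 0 + ⋯ + n (l−1))/n l → 0`, the quotient
`log(m 1 ⋯ m (l−1)) / (−log (m l · ε l))` tends to `α`. -/
theorem stmt4 (Λ α C'' D' : ℝ) (hΛ : 1 < Λ) (hα : α ∈ Set.Ioo (0 : ℝ) 1)
    (hC'' : 0 < C'') (hD' : 0 < D') (n : ℕ → ℕ)
    (hn_pos : ∀ l, 0 < n l) (hn_mono : StrictMono n)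
    (hn_growth :
      Tendsto (fun l => (∑ i ∈ Finset.range l, (n i : ℝ)) / (n l : ℝ)) atTop (nhds 0))
    (ε m : ℕ → ℝ)
    (hε : ∀ l, 1 ≤ l → ε l = D' * Λ ^ (-(α * (n l : ℝ))))
    (hm : ∀ l, 1 ≤ l → m l = C'' * Λ ^ (-((n (l - 1) : ℝ)) + α * (n l : ℝ))) :
    Tendsto
      (fun l => Real.log (∏ i ∈ Finset.Ico 1 l, m i) / (- Real.log (m l * ε l)))
      atTop (nhds α) := by
  have hΛ0 : 0 < Λ := by linarith
  have hL : 0 < Real.log Λ := Real.log_pos hΛ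
  have hmpos : ∀ l, 1 ≤ l → 0 < m l := by
    intro l hl
    rw [hm l hl]
    positivity
  have hlogm : ∀ k, Real.log (m (k + 1)) =
      Real.log C'' + (-(n k : ℝ) + α * (n (k + 1) : ℝ)) * Real.log Λ := by
    intro k
    rw [hm (k + 1) (by omega), Real.log_mul hC''.ne' (by positivity), Real.log_rpow hΛ0]
    simp
  have hloge : ∀ k, Real.log (ε (k + 1)) =
      Real.log D' + (-(α * (n (k + 1) : ℝ))) * Real.log Λ := by
    intro k
    rw [hε (k + 1) (by omega), Real.log_mul hD'.ne' (by positivity), Real.log_rpow hΛ0]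
  have hnum : ∀ k : ℕ, Real.log (∏ i ∈ Finset.Ico 1 (k + 1), m i) =
      k * Real.log C'' + (-(∑ i ∈ Finset.range k, (n i : ℝ)) +
        α * ((∑ i ∈ Finset.range k, (n i : ℝ)) + n k - n 0)) * Real.log Λ := by
    intro k
    induction k with
    | zero => simp
    | succ k ih =>
      rw [Finset.prod_Ico_succ_top (by omega), Real.log_mul
        (Finset.prod_pos (fun i hi => hmpos i (Finset.mem_Ico.1 hi).1)).ne'
        (hmpos _ (by omega)).ne', ih, hlogm, Finset.sum_range_succ]
      push_cast
      ring
  have hden : ∀ k : ℕ, - Real.log (m (k + 1) * ε (k + 1)) =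
      -(Real.log C'' + Real.log D') + n k * Real.log Λ := by
    intro k
    have he : 0 < ε (k + 1) := by
      rw [hε _ (by omega)]
      positivity
    rw [Real.log_mul (hmpos _ (by omega)).ne' he.ne', hlogm, hloge]
    ring
  have hnpos : ∀ k, (0 : ℝ) < n k := fun k => by exact_mod_cast hn_pos k
  have hinv : Tendsto (fun k => ((n k : ℝ))⁻¹) atTop (nhds 0) :=
    tendsto_inv_atTop_zero.comp (tendsto_natCast_atTop_atTop.comp hn_mono.tendsto_atTop)
  have hk : Tendsto (fun k : ℕ => (k : ℝ) / n k) atTop (nhds 0) := by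
    refine squeeze_zero (fun k => by positivity) (fun k => ?_) hn_growth
    refine div_le_div_of_nonneg_right ?_ (hnpos k).le
    calc (k : ℝ) = ∑ i ∈ Finset.range k, (1 : ℝ) := by simp
      _ ≤ _ := Finset.sum_le_sum (fun i _ => by exact_mod_cast hn_pos i)
  have hN : Tendsto (fun k : ℕ => (k : ℝ) / n k * Real.log C'' +
      (-((∑ i ∈ Finset.range k, (n i : ℝ)) / n k) +
        α * ((∑ i ∈ Finset.range k, (n i : ℝ)) / n k + 1 - n 0 * (n k : ℝ)⁻¹)) * Real.log Λ)
      atTop (nhds (0 * Real.log C'' + (-0 + α * (0 + 1 - n 0 * 0)) * Real.log Λ)) :=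
    (hk.mul_const _).add ((hn_growth.neg.add
      (((hn_growth.add_const 1).sub (hinv.const_mul _)).const_mul α)).mul_const _)
  have hD : Tendsto (fun k : ℕ => -(Real.log C'' + Real.log D') * (n k : ℝ)⁻¹ + Real.log Λ)
      atTop (nhds (-(Real.log C'' + Real.log D') * 0 + Real.log Λ)) :=
    (hinv.const_mul _).add_const _
  have hQ := hN.div hD (by simpa using hL.ne')
  rw [← tendsto_add_atTop_iff_nat 1]
  have hlim : (0 * Real.log C'' + (-0 + α * (0 + 1 - n 0 * 0)) * Real.log Λ) /
      (-(Real.log C'' + Real.log D') * 0 + Real.log Λ) = α := by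
    have := hL.ne'
    simp [this]
  rw [hlim] at hQ
  refine hQ.congr (fun k => ?_)
  rw [hnum, hden]
  have h0 := (hnpos k).ne'
  simp only [Pi.div_apply]
  rw [← mul_div_mul_right _ _ h0]
  congr 1
  · field_simp
  · field_simp
end

section
/- Let α ∈ (0,1), let Λ' > Λ > 1, D > 0 be real constants, let M̄ be a positive integer, let I ⊆ ℝ be a nonempty open interval, and let (S_m)_{m∈ℕ} be a family of subsets of ℝ. Assume that for every a₁ ∈ I there exist a sequence of nondegenerate closed bounded intervals (I_k(a₁))_{k≥1} with |I_1(a₁)| ≤ 1 and a sequence of positive integers (m_k(a₁))_{k≥1} such that: (i) the distance from a₁ to I_k(a₁) is at most D·|I_k(a₁)|^α, where |I_k(a₁)| denotes the length of I_k(a₁); (ii) m_{k+M̄}(a₁) > m_j(a₁) for every 0 < j < k; (iii) I_k(a₁) ⊆ S_{m_k(a₁)} for every k; (iv) Λ·|I_{k+1}(a₁)| < |I_k(a₁)| < Λ'·|I_{k+1}(a₁)| for every k. Then the set {a ∈ ℝ : a ∈ S_m for infinitely many m ∈ ℕ} has Hausdorff dimension at least α. -/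
open MeasureTheory ENNReal

lemma aux_count {δ u : ℝ} (hδ : 0 < δ) (hu : 0 ≤ u) (y : ℝ) (x : ℕ → ℝ) (ρ : ℝ)
    (hx : ∀ j, y + 4 * δ * j ≤ x j ∧ x j + ρ ≤ y + 4 * δ * j + 3 * δ)
    (V : Set ℝ) (hV : ∀ a ∈ V, ∀ b ∈ V, |a - b| ≤ u) (F : Finset ℕ)
    (hF : ∀ j ∈ F, (V ∩ Set.Icc (x j) (x j + ρ)).Nonempty) :
    (F.card : ℝ) ≤ 1 + u / δ := by
  have h0 : 0 ≤ u / δ := by positivity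
  rcases F.eq_empty_or_nonempty with rfl | hne
  · simp; linarith
  set j0 := F.min' hne
  set j1 := F.max' hne
  obtain ⟨a, ha, ha1, ha2⟩ := hF j0 (F.min'_mem hne)
  obtain ⟨b, hb, hb1, hb2⟩ := hF j1 (F.max'_mem hne)
  have hle : j0 ≤ j1 := F.min'_le_max' hne
  have hsub : F ⊆ Finset.Icc j0 j1 := fun j hj => by
    simp only [Finset.mem_Icc]; exact ⟨F.min'_le j hj, F.le_max' j hj⟩
  have hc := Finset.card_le_card hsub
  rw [Nat.card_Icc] at hc
  obtain ⟨d, hd⟩ := Nat.exists_eq_add_of_le hle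
  have hc' : (F.card : ℝ) ≤ d + 1 := by
    have : F.card ≤ d + 1 := by omega
    exact_mod_cast this
  have hdu : (d : ℝ) ≤ u / δ := by
    rcases Nat.eq_zero_or_pos d with h | h
    · rw [h]; simpa using h0
    · have h1 : (1 : ℝ) ≤ d := by exact_mod_cast h
      have hj : (j1 : ℝ) = j0 + d := by exact_mod_cast hd
      rw [le_div_iff₀ hδ]
      have h2 := abs_le.1 (hV b hb a ha)
      have h3 := (hx j0).2
      have h4 := (hx j1).1
      rw [hj] at h4
      nlinarith
  linarith

lemma aux_step {α s C : ℝ} (hs : 0 < s) (hsα : s < α) (hα1 : α < 1) (hC : 1 ≤ C)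
    (U : ℕ → Set ℝ) (u : ℕ → ℝ) (hu : ∀ i, 0 < u i)
    (hU : ∀ i, ∀ a ∈ U i, ∀ b ∈ U i, |a - b| ≤ u i)
    (hsum : Summable fun i => u i ^ s) (P : ℝ → ℝ → Prop) (y l : ℝ) (hl : 0 < l)
    (hJ : ∑' i, Set.indicator {i | (U i ∩ Set.Icc y (y + l)).Nonempty} (fun i => u i ^ s) i
      ≤ l ^ s / 32)
    (hc : ∃ ρ0 > 0, ∀ ρ, 0 < ρ → ρ < ρ0 → ∀ a ∈ Set.Icc y (y + l),
      ∃ x, |x - a| ≤ C * ρ ^ α ∧ P x ρ) :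
    ∃ x ρ, 0 < ρ ∧ ρ ≤ l / 2 ∧ y ≤ x ∧ x + ρ ≤ y + l ∧ P x ρ ∧
      ∑' i, Set.indicator {i | (U i ∩ Set.Icc x (x + ρ)).Nonempty} (fun i => u i ^ s) i
      ≤ ρ ^ s / 32 := by
  obtain ⟨ρ0, hρ0, hc⟩ := hc
  have hα : 0 < α := hs.trans hsα
  have key : ∀ (t B : ℝ), 0 < t → 0 < B → ∀ᶠ ρ in nhdsWithin (0 : ℝ) (Set.Ioi 0), C * ρ ^ t < B := by
    intro t B ht hB
    have h1 : Filter.Tendsto (fun ρ : ℝ => C * ρ ^ t) (nhds 0) (nhds (C * 0 ^ t)) :=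
      ((Real.continuousAt_rpow_const 0 t (Or.inr ht.le)).tendsto).const_mul C
    rw [Real.zero_rpow ht.ne', mul_zero] at h1
    exact (h1.eventually_lt_const hB).filter_mono nhdsWithin_le_nhds
  have hlt : ∀ B : ℝ, 0 < B → ∀ᶠ ρ in nhdsWithin (0 : ℝ) (Set.Ioi 0), ρ < B := fun B hB =>
    (Filter.Tendsto.eventually_lt_const hB Filter.tendsto_id).filter_mono nhdsWithin_le_nhds
  obtain ⟨ρ, hρ, h1, h2, h3, h4, h5⟩ := ((self_mem_nhdsWithin : Set.Ioi (0:ℝ) ∈ _) |>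
    Filter.Eventually.and <| (hlt ρ0 hρ0).and <| (hlt (l / 2) (by positivity)).and <|
    (hlt 1 one_pos).and <| (key α (l / 8) hα (by positivity)).and
      (key (α - s) (l ^ (1 - s) / 32) (by linarith) (by positivity))).exists
  have hρ : 0 < ρ := hρ
  set δ := C * ρ ^ α with hδ
  have hδρ : ρ ≤ δ := by
    have : ρ ^ (1 : ℝ) ≤ ρ ^ α := Real.rpow_le_rpow_of_exponent_ge hρ h3.le hα1.le
    rw [Real.rpow_one] at this
    nlinarith
  have hδ0 : 0 < δ := lt_of_lt_of_le hρ hδρ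
  set n := ⌊l / (4 * δ)⌋₊ with hn
  have hn1 : (n : ℝ) ≤ l / (4 * δ) := Nat.floor_le (by positivity)
  have hn2 : l / (4 * δ) < n + 1 := Nat.lt_floor_add_one _
  rw [le_div_iff₀ (by positivity)] at hn1
  rw [div_lt_iff₀ (by positivity)] at hn2
  have hn3 : l / (8 * δ) < n := by
    rw [div_lt_iff₀ (by positivity)]; nlinarith
  have hch : ∀ j : ℕ, ∃ x, (y + 4 * δ * j ≤ x ∧ x + ρ ≤ y + 4 * δ * j + 3 * δ) ∧ (j < n → P x ρ) := by
    intro j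
    by_cases hj : j < n
    · have hj' : (j : ℝ) + 1 ≤ n := by exact_mod_cast hj
      obtain ⟨x, hx, hP⟩ := hc ρ hρ h1 (y + 4 * δ * j + δ) ⟨by nlinarith [(by positivity : (0:ℝ) ≤ 4 * δ * j)], by nlinarith⟩
      have := abs_le.1 hx
      exact ⟨x, ⟨by linarith, by linarith⟩, fun _ => hP⟩
    · exact ⟨y + 4 * δ * j, ⟨le_rfl, by linarith⟩, fun h => absurd h hj⟩
  choose x hx hP using hch
  have hsub : ∀ j < n, y ≤ x j ∧ x j + ρ ≤ y + l := by
    intro j hj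
    have hj' : (j : ℝ) + 1 ≤ n := by exact_mod_cast hj
    have : (0 : ℝ) ≤ 4 * δ * j := by positivity
    have := hx j
    constructor <;> nlinarith
  set A := 32 / ρ ^ s with hA
  have hρs : 0 < ρ ^ s := Real.rpow_pos_of_pos hρ s
  have hA0 : 0 < A := by positivity
  have hus : ∀ i, 0 < u i ^ s := fun i => Real.rpow_pos_of_pos (hu i) s
  set v : ℕ → ℝ := fun i => u i ^ s with hv
  set w : ℕ → ℝ := fun i => min 1 (A * v i) with hw
  have hw0 : ∀ i, 0 ≤ w i := fun i => le_min zero_le_one (mul_nonneg hA0.le (hus i).le)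
  have hwA : ∀ i, w i ≤ A * v i := fun i => min_le_right _ _
  have hwsum : Summable w := Summable.of_nonneg_of_le hw0 hwA (hsum.mul_left A)
  set M : ℕ → Set ℕ := fun j => {i | (U i ∩ Set.Icc (x j) (x j + ρ)).Nonempty} with hM
  set T : Set ℕ := {i | (U i ∩ Set.Icc y (y + l)).Nonempty} with hT
  have hMT : ∀ j < n, M j ⊆ T := by
    intro j hj i hi
    exact hi.mono (Set.inter_subset_inter_right _ (Set.Icc_subset_Icc (hsub j hj).1 (hsub j hj).2))
  have hvT : Summable (T.indicator v) := hsum.indicator T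
  have huT : ∀ i ∈ T, u i ≤ v i * l ^ (1 - s) := by
    intro i hi
    have e1 : v i ≤ l ^ s / 32 := by
      refine le_trans ?_ hJ
      have := hvT.le_tsum i (fun j _ => Set.indicator_nonneg (fun k _ => (hus k).le) j)
      rwa [Set.indicator_of_mem hi] at this
    have e2 : u i ≤ l := by
      rw [← Real.rpow_le_rpow_iff (hu i).le hl.le hs]
      have : 0 < l ^ s := Real.rpow_pos_of_pos hl s
      have e1 : u i ^ s ≤ l ^ s / 32 := e1
      linarith
    calc u i = u i ^ s * u i ^ (1 - s) := by
          rw [← Real.rpow_add (hu i)]; simp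
      _ ≤ v i * l ^ (1 - s) := by
          apply mul_le_mul_of_nonneg_left _ (hus i).le
          exact Real.rpow_le_rpow (hu i).le e2 (by linarith)
  have hbound : ∀ i, ∑ j ∈ Finset.range n, (M j).indicator w i ≤
      (A + l ^ (1 - s) / δ) * T.indicator v i := by
    intro i
    by_cases hi : i ∈ T
    · rw [Set.indicator_of_mem hi]
      classical
      have : ∑ j ∈ Finset.range n, (M j).indicator w i =
          ((Finset.range n).filter (fun j => i ∈ M j)).card * w i := by
        simp only [Set.indicator_apply]
        rw [← Finset.sum_filter, Finset.sum_const, nsmul_eq_mul]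
      rw [this]
      have hcnt := aux_count hδ0 (hu i).le y x ρ hx (U i) (hU i)
        ((Finset.range n).filter (fun j => i ∈ M j)) (fun j hj => (Finset.mem_filter.1 hj).2)
      calc _ ≤ (1 + u i / δ) * w i := mul_le_mul_of_nonneg_right hcnt (hw0 i)
        _ = w i + u i / δ * w i := by ring
        _ ≤ A * v i + u i / δ * 1 := by
            have := hu i
            gcongr
            · exact hwA i
            · exact min_le_left _ _
        _ ≤ A * v i + (v i * l ^ (1 - s)) / δ * 1 := by
            gcongr; exact huT i hi
        _ = _ := by ring
    · rw [Set.indicator_of_notMem hi, mul_zero]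
      apply le_of_eq
      apply Finset.sum_eq_zero
      intro j hj
      exact Set.indicator_of_notMem (fun h => hi (hMT j (Finset.mem_range.1 hj) h)) _
  have hls : 0 < l ^ s := Real.rpow_pos_of_pos hl s
  have htot : ∑ j ∈ Finset.range n, ∑' i, (M j).indicator w i < n := by
    rw [← Summable.tsum_finsetSum (fun j _ => hwsum.indicator _)]
    calc _ ≤ ∑' i, (A + l ^ (1 - s) / δ) * T.indicator v i :=
          Summable.tsum_le_tsum hbound (summable_sum (fun j _ => hwsum.indicator _))
            (hvT.mul_left _)
      _ = (A + l ^ (1 - s) / δ) * ∑' i, T.indicator v i := tsum_mul_left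
      _ ≤ (A + l ^ (1 - s) / δ) * (l ^ s / 32) := by
          gcongr
      _ = l ^ s / ρ ^ s + (l ^ (1 - s) * l ^ s) / (32 * δ) := by
          rw [hA]; field_simp
      _ = l ^ s / ρ ^ s + l / (32 * δ) := by
          rw [← Real.rpow_add hl]; simp
      _ ≤ l / (32 * δ) + l / (32 * δ) := by
          refine add_le_add ?_ le_rfl
          rw [div_le_div_iff₀ hρs (by positivity)]
          have e1 : C * ρ ^ α = C * ρ ^ (α - s) * ρ ^ s := by
            rw [mul_assoc, ← Real.rpow_add hρ]; simp
          have e2 : l = l ^ (1 - s) * l ^ s := by rw [← Real.rpow_add hl]; simp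
          calc l ^ s * (32 * δ) = (C * ρ ^ (α - s)) * (32 * (l ^ s * ρ ^ s)) := by rw [hδ, e1]; ring
            _ ≤ (l ^ (1 - s) / 32) * (32 * (l ^ s * ρ ^ s)) := by gcongr
            _ = (l ^ (1 - s) * l ^ s) * ρ ^ s := by ring
            _ = l * ρ ^ s := by rw [← e2]
      _ = l / (8 * δ) / 2 := by field_simp; norm_num
      _ ≤ l / (8 * δ) := by
          have : 0 < l / (8 * δ) := by positivity
          linarith
      _ < n := hn3
  obtain ⟨j, hj, hjlt⟩ : ∃ j ∈ Finset.range n, ∑' i, (M j).indicator w i < 1 := by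
    apply Finset.exists_lt_of_sum_lt
    simpa using htot
  have hjn := Finset.mem_range.1 hj
  refine ⟨x j, ρ, hρ, h2.le, (hsub j hjn).1, (hsub j hjn).2, hP j hjn, ?_⟩
  have heq : (M j).indicator w = fun i => A * (M j).indicator v i := by
    funext i
    by_cases hi : i ∈ M j
    · have := (hwsum.indicator (M j)).le_tsum i (fun k _ => Set.indicator_nonneg (fun k _ => hw0 k) k)
      rw [Set.indicator_of_mem hi] at this ⊢
      rw [Set.indicator_of_mem hi]
      have hlt : w i < 1 := lt_of_le_of_lt this hjlt
      rcases min_lt_iff.1 hlt with h | h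
      · exact absurd h (lt_irrefl _)
      · exact min_eq_right h.le
    · rw [Set.indicator_of_notMem hi, Set.indicator_of_notMem hi, mul_zero]
  rw [heq, tsum_mul_left, hA, div_mul_eq_mul_div, div_lt_one hρs] at hjlt
  have hgoal : ∑' i, (M j).indicator v i ≤ ρ ^ s / 32 := by linarith
  exact hgoal

lemma aux_limit {α s C : ℝ} (hs : 0 < s) (hsα : s < α) (hα1 : α < 1) (hC : 1 ≤ C)
    (U : ℕ → Set ℝ) (u : ℕ → ℝ) (hu : ∀ i, 0 < u i)
    (hU : ∀ i, ∀ a ∈ U i, ∀ b ∈ U i, |a - b| ≤ u i)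
    (hsum : Summable fun i => u i ^ s) (S : ℕ → Set ℝ) (p l : ℝ) (hl : 0 < l)
    (hJ : ∑' i, u i ^ s ≤ l ^ s / 32)
    (hc : ∀ N : ℕ, ∃ ρ0 > 0, ∀ ρ, 0 < ρ → ρ < ρ0 → ∀ a ∈ Set.Icc p (p + l),
      ∃ x, |x - a| ≤ C * ρ ^ α ∧ ∃ m ≥ N, Set.Icc x (x + ρ) ⊆ S m) :
    ∃ x, {m : ℕ | x ∈ S m}.Infinite ∧ ∀ i, x ∉ U i := by
  let Good : ℝ × ℝ → Prop := fun z => 0 < z.2 ∧ Set.Icc z.1 (z.1 + z.2) ⊆ Set.Icc p (p + l) ∧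
    ∑' i, Set.indicator {i | (U i ∩ Set.Icc z.1 (z.1 + z.2)).Nonempty} (fun i => u i ^ s) i
      ≤ z.2 ^ s / 32
  have hstep : ∀ (N : ℕ) (z : {z // Good z}), ∃ z' : {z // Good z}, z'.1.2 ≤ z.1.2 / 2 ∧
      Set.Icc z'.1.1 (z'.1.1 + z'.1.2) ⊆ Set.Icc z.1.1 (z.1.1 + z.1.2) ∧
      ∃ m ≥ N, Set.Icc z'.1.1 (z'.1.1 + z'.1.2) ⊆ S m := by
    rintro N ⟨⟨y, l'⟩, hl', hsub, hz⟩
    obtain ⟨ρ0, hρ0, h⟩ := hc N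
    obtain ⟨x, ρ, h1, h2, h3, h4, h5, h6⟩ := aux_step hs hsα hα1 hC U u hu hU hsum
      (fun x ρ => ∃ m ≥ N, Set.Icc x (x + ρ) ⊆ S m) y l' hl' hz
      ⟨ρ0, hρ0, fun ρ a b c d => h ρ a b c (hsub d)⟩
    have h7 := Set.Icc_subset_Icc h3 h4
    exact ⟨⟨(x, ρ), h1, h7.trans hsub, h6⟩, h2, h7, h5⟩
  choose f hf1 hf2 hf3 using hstep
  have h0 : Good (p, l) := by
    refine ⟨hl, subset_rfl, le_trans ?_ hJ⟩
    exact Summable.tsum_le_tsum (fun i => Set.indicator_le_self' (fun _ _ =>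
      (Real.rpow_pos_of_pos (hu _) s).le) i) (hsum.indicator _) hsum
  let z : ℕ → {z // Good z} := fun n => Nat.rec ⟨(p, l), h0⟩ (fun n z => f n z) n
  have hz : ∀ n, z (n + 1) = f n (z n) := fun n => rfl
  obtain ⟨x, hx⟩ := IsCompact.nonempty_iInter_of_sequence_nonempty_isCompact_isClosed
    (fun n => Set.Icc (z n).1.1 ((z n).1.1 + (z n).1.2))
    (fun n => by simp only [hz]; exact hf2 n (z n))
    (fun n => Set.nonempty_Icc.2 (by linarith [(z n).2.1])) isCompact_Icc
    (fun n => isClosed_Icc)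
  rw [Set.mem_iInter] at hx
  have hlen : ∀ n, (z n).1.2 ≤ l * (1 / 2) ^ n := by
    intro n
    induction n with
    | zero => simp [z]
    | succ n ih =>
      have := hf1 n (z n)
      rw [← hz] at this
      rw [pow_succ]; linarith
  refine ⟨x, ?_, ?_⟩
  · rw [Set.infinite_iff_exists_gt]
    intro N
    obtain ⟨m, hm, hm2⟩ := hf3 (N + 1) (z (N + 1))
    rw [← hz] at hm2
    exact ⟨m, hm2 (hx (N + 1 + 1)), hm⟩
  · intro i hi
    have hle : ∀ n, u i ≤ l * (1 / 2) ^ n := by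
      intro n
      refine le_trans ?_ (hlen n)
      obtain ⟨g1, -, g3⟩ := (z n).2
      have hmem : i ∈ {i | (U i ∩ Set.Icc (z n).1.1 ((z n).1.1 + (z n).1.2)).Nonempty} :=
        ⟨x, hi, hx n⟩
      have := (hsum.indicator {i | (U i ∩ Set.Icc (z n).1.1 ((z n).1.1 + (z n).1.2)).Nonempty}).le_tsum i
        (fun j _ => Set.indicator_nonneg (fun k _ => (Real.rpow_pos_of_pos (hu k) s).le) j)
      rw [Set.indicator_of_mem hmem] at this
      rw [← Real.rpow_le_rpow_iff (hu i).le g1.le hs]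
      have h5 : 0 < (z n).1.2 ^ s := Real.rpow_pos_of_pos g1 s
      linarith
    have ht : Filter.Tendsto (fun n : ℕ => l * (1 / 2 : ℝ) ^ n) Filter.atTop (nhds (l * 0)) :=
      (_root_.tendsto_pow_atTop_nhds_zero_of_lt_one (by norm_num) (by norm_num)).const_mul l
    have := ge_of_tendsto' ht hle
    linarith [hu i]

lemma aux_cover {s : ℝ} (hs : 0 < s) (E : Set ℝ) (hE : μH[s] E = 0) (ε : ℝ) (hε : 0 < ε) :
    ∃ (U : ℕ → Set ℝ) (u : ℕ → ℝ), (∀ i, 0 < u i) ∧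
    (∀ i, ∀ a ∈ U i, ∀ b ∈ U i, |a - b| ≤ u i) ∧
    (Summable fun i => u i ^ s) ∧ ∑' i, u i ^ s ≤ ε ∧ E ⊆ ⋃ i, U i := by
  rw [Measure.hausdorffMeasure_apply] at hE
  simp only [ENNReal.iSup_eq_zero] at hE
  have h1 := hE 1 one_pos
  have h2 : (⨅ (t : ℕ → Set ℝ) (_ : E ⊆ ⋃ n, t n) (_ : ∀ n, Metric.ediam (t n) ≤ 1),
          ∑' n, ⨆ _ : (t n).Nonempty, Metric.ediam (t n) ^ s) < ENNReal.ofReal (ε / 2) := by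
    rw [h1]; simpa using hε
  simp only [iInf_lt_iff] at h2
  obtain ⟨U, hcov, hd, hsum⟩ := h2
  set a : ℕ → ℝ≥0∞ := fun n => ⨆ _ : (U n).Nonempty, Metric.ediam (U n) ^ s with ha
  have hne : ∑' n, a n ≠ ∞ := (lt_of_lt_of_le hsum le_top).ne
  have han : ∀ n, a n ≠ ∞ := ENNReal.ne_top_of_tsum_ne_top hne
  have hS1 : Summable fun n => (a n).toReal := ENNReal.summable_toReal hne
  have hT1 : ∑' n, (a n).toReal ≤ ε / 2 := by
    rw [← ENNReal.tsum_toReal_eq han]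
    exact ENNReal.toReal_le_of_le_ofReal (by positivity) hsum.le
  have hS2 : Summable fun n : ℕ => (ε / 4) * (1 / 2 : ℝ) ^ n := summable_geometric_two.mul_left _
  have hT2 : ∑' n : ℕ, (ε / 4) * (1 / 2 : ℝ) ^ n = ε / 2 := by
    rw [tsum_mul_left, tsum_geometric_two]; ring
  have hpos : ∀ n, 0 < (a n).toReal + (ε / 4) * (1 / 2 : ℝ) ^ n := fun n => by
    have : 0 ≤ (a n).toReal := ENNReal.toReal_nonneg
    positivity
  have hus : ∀ n, (((a n).toReal + (ε / 4) * (1 / 2 : ℝ) ^ n) ^ (1 / s)) ^ s =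
      (a n).toReal + (ε / 4) * (1 / 2 : ℝ) ^ n := fun n => by
    rw [← Real.rpow_mul (hpos n).le, one_div_mul_cancel hs.ne', Real.rpow_one]
  refine ⟨U, fun n => ((a n).toReal + (ε / 4) * (1 / 2 : ℝ) ^ n) ^ (1 / s), ?_, ?_, ?_, ?_, hcov⟩
  · intro i; exact Real.rpow_pos_of_pos (hpos i) _
  · intro i x hx y hy
    rw [← Real.rpow_le_rpow_iff (abs_nonneg _) (Real.rpow_pos_of_pos (hpos i) _).le hs, hus]
    have h3 : edist x y ^ s ≤ a i := by
      have : Metric.ediam (U i) ^ s ≤ a i := le_iSup_of_le ⟨x, hx⟩ le_rfl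
      refine le_trans ?_ this
      exact ENNReal.rpow_le_rpow (Metric.edist_le_ediam_of_mem hx hy) hs.le
    have h4 := ENNReal.toReal_mono (han i) h3
    rw [← ENNReal.toReal_rpow, edist_dist, ENNReal.toReal_ofReal dist_nonneg, Real.dist_eq] at h4
    have : 0 < (ε / 4) * (1 / 2 : ℝ) ^ i := by positivity
    linarith
  · simp only [hus]; exact hS1.add hS2
  · simp only [hus]
    rw [hS1.tsum_add hS2, hT2]; linarith

lemma aux_m (Mbar : ℕ) (m : ℕ → ℕ)
    (hm : ∀ k, 1 ≤ k → ∀ j, 0 < j → j < k → m j < m (k + Mbar)) :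
    ∀ N k, 1 + N * (Mbar + 1) ≤ k → N ≤ m k := by
  intro N
  induction N with
  | zero => intro k _; exact Nat.zero_le _
  | succ N ih =>
    intro k hk
    have e : (N + 1) * (Mbar + 1) = N * (Mbar + 1) + Mbar + 1 := by ring
    rw [e] at hk
    have h1 := ih (1 + N * (Mbar + 1)) le_rfl
    have h2 := hm (k - Mbar) (by omega) (1 + N * (Mbar + 1)) (by omega) (by omega)
    rw [Nat.sub_add_cancel (by omega)] at h2
    omega

lemma aux_point (α Λ Λ' D : ℝ) (hα : α ∈ Set.Ioo (0 : ℝ) 1) (hΛ : 1 < Λ)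
    (hΛ' : Λ < Λ') (hD : 0 < D) (Mbar : ℕ) (S : ℕ → Set ℝ) (a₁ L : ℝ) (hL : 0 < L)
    (e : ℕ → ℝ × ℝ) (m : ℕ → ℕ) (hL1 : L ≤ (e 1).2 - (e 1).1)
    (h : ∀ k, 1 ≤ k →
        (e k).1 < (e k).2 ∧
        Metric.infDist a₁ (Set.Icc (e k).1 (e k).2) ≤ D * ((e k).2 - (e k).1) ^ α ∧
        (∀ j, 0 < j → j < k → m j < m (k + Mbar)) ∧
        Set.Icc (e k).1 (e k).2 ⊆ S (m k) ∧
        Λ * ((e (k + 1)).2 - (e (k + 1)).1) < (e k).2 - (e k).1 ∧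
        (e k).2 - (e k).1 < Λ' * ((e (k + 1)).2 - (e (k + 1)).1))
    (N : ℕ) (ρ : ℝ) (hρ : 0 < ρ) (hρ1 : ρ < 1)
    (hρL : ρ < L / Λ' ^ (1 + N * (Mbar + 1))) :
    ∃ x, |x - a₁| ≤ (1 + D * Λ' ^ α) * ρ ^ α ∧ ∃ n ≥ N, Set.Icc x (x + ρ) ⊆ S n := by
  set len : ℕ → ℝ := fun k => (e k).2 - (e k).1 with hlen
  have hΛ0 : 0 < Λ := by linarith
  have hΛ'1 : 1 < Λ' := by linarith
  have hΛ'0 : 0 < Λ' := by linarith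
  have hup : ∀ k, len (k + 1) ≤ len 1 * (1 / Λ) ^ k := by
    intro k
    induction k with
    | zero => simp
    | succ k ih =>
      have h1 := (h (k + 1) (by omega)).2.2.2.2.1
      have h2 : len (k + 1 + 1) ≤ len (k + 1) * (1 / Λ) := by
        rw [mul_one_div, le_div_iff₀ hΛ0, mul_comm]; exact h1.le
      rw [pow_succ, ← mul_assoc]
      exact h2.trans (mul_le_mul_of_nonneg_right ih (by positivity))
  have hlow : ∀ k, L ≤ len (k + 1) * Λ' ^ k := by
    intro k
    induction k with
    | zero => simpa using hL1
    | succ k ih =>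
      have h1 := (h (k + 1) (by omega)).2.2.2.2.2
      refine ih.trans ?_
      rw [pow_succ', ← mul_assoc]
      refine mul_le_mul_of_nonneg_right ?_ (by positivity)
      rw [mul_comm]; exact h1.le
  have hex : ∃ k, len (k + 1) < ρ := by
    have ht : Filter.Tendsto (fun k : ℕ => len 1 * (1 / Λ) ^ k) Filter.atTop (nhds (len 1 * 0)) :=
      (_root_.tendsto_pow_atTop_nhds_zero_of_lt_one (by positivity)
        (by rw [div_lt_one hΛ0]; exact hΛ)).const_mul _
    rw [mul_zero] at ht
    obtain ⟨k, hk⟩ := (ht.eventually_lt_const hρ).exists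
    exact ⟨k, (hup k).trans_lt hk⟩
  classical
  set k := Nat.find hex with hk
  have hk1 : len (k + 1) < ρ := Nat.find_spec hex
  have hkK : 1 + N * (Mbar + 1) ≤ k := by
    by_contra hcon
    push Not at hcon
    have h1 := hlow k
    have h2 : Λ' ^ k ≤ Λ' ^ (1 + N * (Mbar + 1)) := pow_le_pow_right₀ hΛ'1.le hcon.le
    rw [lt_div_iff₀ (by positivity)] at hρL
    have h3 : 0 < Λ' ^ k := by positivity
    nlinarith
  have hkpos : 1 ≤ k := by omega
  have hk2 : ρ ≤ len k := by
    have := Nat.find_min hex (m := k - 1) (by omega)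
    rw [Nat.sub_add_cancel hkpos] at this
    exact not_lt.1 this
  obtain ⟨g1, g2, -, g4, -, g6⟩ := h k hkpos
  obtain ⟨z, hz, hzd⟩ := (isCompact_Icc (a := (e k).1) (b := (e k).2)).exists_infDist_eq_dist
    (Set.nonempty_Icc.2 g1.le) a₁
  rw [hzd, Real.dist_eq] at g2
  have g7 : len k ≤ Λ' * ρ := by
    refine (le_of_lt g6).trans ?_
    exact mul_le_mul_of_nonneg_left hk1.le hΛ'0.le
  have g8 : (len k) ^ α ≤ Λ' ^ α * ρ ^ α := by
    rw [← Real.mul_rpow hΛ'0.le hρ.le]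
    exact Real.rpow_le_rpow (by linarith) g7 hα.1.le
  have g9 : |a₁ - z| ≤ D * Λ' ^ α * ρ ^ α := by
    refine g2.trans ?_
    rw [mul_assoc]
    exact mul_le_mul_of_nonneg_left g8 hD.le
  have g10 : ρ ≤ ρ ^ α := by
    have : ρ ^ (1 : ℝ) ≤ ρ ^ α := Real.rpow_le_rpow_of_exponent_ge hρ hρ1.le hα.2.le
    rwa [Real.rpow_one] at this
  have g11 : ρ ≤ (e k).2 - (e k).1 := hk2
  obtain ⟨b1, b2⟩ := abs_le.1 g9
  refine ⟨min z ((e k).2 - ρ), ?_, m k, ?_, ?_⟩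
  · have c1 : min z ((e k).2 - ρ) ≤ z := min_le_left _ _
    have c2 : z - ρ ≤ min z ((e k).2 - ρ) := le_min (by linarith) (by linarith [hz.2])
    have c3 : (1 + D * Λ' ^ α) * ρ ^ α = ρ ^ α + D * Λ' ^ α * ρ ^ α := by ring
    rw [c3, abs_le]
    constructor <;> linarith
  · exact aux_m Mbar m (fun k hk => (h k hk).2.2.1) N k hkK
  · refine subset_trans (Set.Icc_subset_Icc (le_min hz.1 (by linarith)) ?_) g4
    linarith [min_le_right z ((e k).2 - ρ)]

/-- Abstract version of the construction of Section 2.3 of the paper: if around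
every parameter `a₁` of a nonempty open interval `I` there accumulate, at a
polynomial rate of exponent `α`, intervals `I_k(a₁)` of parameters belonging to
the sets `S (m k)` with (essentially) growing indices `m k`, then the set of
parameters belonging to infinitely many of the `S m` has Hausdorff dimension at
least `α`.  The interval `I_k(a₁)` is encoded by its endpoints `(e k).1 < (e k).2`. -/
theorem stmt6 (α Λ Λ' D : ℝ) (hα : α ∈ Set.Ioo (0 : ℝ) 1) (hΛ : 1 < Λ)
    (hΛ' : Λ < Λ') (hD : 0 < D) (Mbar : ℕ) (hMbar : 0 < Mbar) (I : Set ℝ)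
    (hI : ∃ c d : ℝ, c < d ∧ I = Set.Ioo c d) (S : ℕ → Set ℝ)
    (hyp : ∀ a₁ ∈ I, ∃ (e : ℕ → ℝ × ℝ) (m : ℕ → ℕ),
      ((e 1).2 - (e 1).1 ≤ 1) ∧
      (∀ k, 1 ≤ k → 0 < m k) ∧
      (∀ k, 1 ≤ k →
        -- nondegenerate closed bounded intervals
        (e k).1 < (e k).2 ∧
        -- (i) the distance from `a₁` to `I_k(a₁)` is at most `D·|I_k(a₁)|^α`
        Metric.infDist a₁ (Set.Icc (e k).1 (e k).2) ≤ D * ((e k).2 - (e k).1) ^ α ∧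
        -- (ii) `m (k + Mbar) > m j` for all `0 < j < k`
        (∀ j, 0 < j → j < k → m j < m (k + Mbar)) ∧
        -- (iii) `I_k(a₁) ⊆ S (m k)`
        Set.Icc (e k).1 (e k).2 ⊆ S (m k) ∧
        -- (iv) `Λ·|I_{k+1}| < |I_k| < Λ'·|I_{k+1}|`
        Λ * ((e (k + 1)).2 - (e (k + 1)).1) < (e k).2 - (e k).1 ∧
        (e k).2 - (e k).1 < Λ' * ((e (k + 1)).2 - (e (k + 1)).1))) :
    ENNReal.ofReal α ≤ dimH {a : ℝ | {m : ℕ | a ∈ S m}.Infinite} := by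
  obtain ⟨c, d, hcd, rfl⟩ := hI
  choose! e m he1 hm he using hyp
  let A : ℕ → Set ℝ := fun n => {a | a ∈ Set.Ioo c d ∧ 1 / ((n : ℝ) + 1) ≤ (e a 1).2 - (e a 1).1}
  have hdense : Dense (⋃ n, interior (closure (A n) ∪ (Set.Ioo c d)ᶜ)) := by
    apply dense_iUnion_interior_of_closed
    · exact fun n => isClosed_closure.union isOpen_Ioo.isClosed_compl
    · rw [Set.eq_univ_iff_forall]
      intro a
      rw [Set.mem_iUnion]
      by_cases ha : a ∈ Set.Ioo c d
      · have h1 := (he a ha 1 le_rfl).1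
        obtain ⟨n, hn⟩ := exists_nat_one_div_lt (sub_pos.2 h1)
        exact ⟨n, Or.inl (subset_closure ⟨ha, hn.le⟩)⟩
      · exact ⟨0, Or.inr ha⟩
  obtain ⟨a0, ha0, ha0'⟩ := hdense.inter_open_nonempty _ isOpen_Ioo (Set.nonempty_Ioo.2 hcd)
  obtain ⟨n, hn⟩ := Set.mem_iUnion.1 ha0'
  obtain ⟨r, hr, hball⟩ := Metric.isOpen_iff.1 (isOpen_interior.inter isOpen_Ioo) a0 ⟨hn, ha0⟩
  have hJcl : Set.Icc a0 (a0 + r / 2) ⊆ closure (A n) := by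
    intro a ha
    have h1 : a ∈ Metric.ball a0 r := by
      rw [Metric.mem_ball, Real.dist_eq, abs_lt]; constructor <;> linarith [ha.1, ha.2]
    obtain ⟨h2, h3⟩ := hball h1
    rcases interior_subset h2 with h | h
    · exact h
    · exact absurd h3 h
  have hΛ'1 : 1 < Λ' := by linarith
  have hΛ'0 : 0 < Λ' := by linarith
  have hstar : ∀ N : ℕ, ∃ ρ0 > 0, ∀ ρ, 0 < ρ → ρ < ρ0 → ∀ a ∈ Set.Icc a0 (a0 + r / 2),
      ∃ x, |x - a| ≤ (2 + D * Λ' ^ α) * ρ ^ α ∧ ∃ m ≥ N, Set.Icc x (x + ρ) ⊆ S m := by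
    intro N
    have hLp : (0 : ℝ) < 1 / ((n : ℝ) + 1) := by positivity
    refine ⟨min 1 (1 / ((n : ℝ) + 1) / Λ' ^ (1 + N * (Mbar + 1))),
      lt_min one_pos (by positivity), ?_⟩
    intro ρ hρ hρ0 a ha
    obtain ⟨a', ha', hd⟩ := Metric.mem_closure_iff.1 (hJcl ha) (ρ ^ α) (Real.rpow_pos_of_pos hρ α)
    obtain ⟨x, hx, hx2⟩ := aux_point α Λ Λ' D hα hΛ hΛ' hD Mbar S a' _ hLp (e a') (m a') ha'.2
      (he a' ha'.1) N ρ hρ (hρ0.trans_le (min_le_left _ _)) (hρ0.trans_le (min_le_right _ _))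
    refine ⟨x, ?_, hx2⟩
    rw [Real.dist_eq] at hd
    calc |x - a| = |(x - a') - (a - a')| := by ring_nf
      _ ≤ |x - a'| + |a - a'| := abs_sub _ _
      _ ≤ (1 + D * Λ' ^ α) * ρ ^ α + ρ ^ α := add_le_add hx hd.le
      _ = _ := by ring
  have hC : 1 ≤ 2 + D * Λ' ^ α := by
    have : 0 < D * Λ' ^ α := by positivity
    linarith
  refine le_of_forall_lt fun t ht => ?_
  obtain ⟨s, hts, hsα⟩ := ENNReal.lt_iff_exists_nnreal_btwn.1 ht
  refine lt_of_lt_of_le hts (le_dimH_of_hausdorffMeasure_ne_zero ?_)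
  intro hzero
  have hs : (0 : ℝ) < s := by
    have : (0 : ℝ≥0∞) < s := lt_of_le_of_lt bot_le hts
    exact_mod_cast this
  have hsα' : (s : ℝ) < α := by
    have := (ENNReal.lt_ofReal_iff_toReal_lt ENNReal.coe_ne_top).1 hsα
    simpa using this
  have hl : 0 < r / 2 := by positivity
  obtain ⟨U, u, hu, hU, hsum, hle, hcov⟩ := aux_cover hs _ hzero ((r / 2) ^ (s : ℝ) / 32)
    (by positivity)
  obtain ⟨x, hx1, hx2⟩ := aux_limit hs hsα' hα.2 hC U u hu hU hsum S a0 (r / 2) hl hle hstar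
  obtain ⟨i, hi⟩ := Set.mem_iUnion.1 (hcov hx1)
  exact hx2 i hi
end

section
/- Let b ∈ (0,1), Λ ∈ (1,5], and C ≥ 1 be real numbers, and let (σ_k)_{k∈ℤ} and (λ_k)_{k∈ℤ} be families of positive real numbers such that for every k ∈ ℤ one has σ_k·λ_k ≤ C·b^{|k|} and C^{−1}·Λ^{|k|} ≤ σ_k ≤ 5^{|k|}. Then there exists a constant C' > 0, depending only on b, Λ, and C, such that for all natural numbers n and n' with 1/σ_n ≤ λ_{−n'}, the following hold: (a) n' ≤ (n·log 5 + log C')/|log b|; and (b) σ_{n'} ≤ C'·σ_n^{(log 5)²/(|log b|·log Λ)}. In particular, σ_n·σ_{n'} ≤ C'·σ_n^{1 + (log 5)²/(|log b|·log Λ)}. -/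
/-- The abstract inequality of the unnumbered Proposition of Section 2.2 of the
paper: from `σ_k·λ_k ≤ C·b^{|k|}` and `C⁻¹·Λ^{|k|} ≤ σ_k ≤ 5^{|k|}`, one gets a
constant `C'` depending only on `b`, `Λ`, `C` such that whenever
`1/σ_n ≤ λ_{−n'}`, the index `n'` is at most `(n·log 5 + log C')/|log b|` and
`σ_{n'} ≤ C'·σ_n^{(log 5)²/(|log b|·log Λ)}`; in particular
`σ_n·σ_{n'} ≤ C'·σ_n^{1 + (log 5)²/(|log b|·log Λ)}`. -/
theorem stmt8 (b Λ C : ℝ) (hb : b ∈ Set.Ioo (0 : ℝ) 1) (hΛ : Λ ∈ Set.Ioc (1 : ℝ) 5)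
    (hC : 1 ≤ C) :
    ∃ C' : ℝ, 0 < C' ∧
      ∀ σ lam : ℤ → ℝ,
        (∀ k : ℤ, 0 < σ k) → (∀ k : ℤ, 0 < lam k) →
        (∀ k : ℤ, σ k * lam k ≤ C * b ^ k.natAbs) →
        (∀ k : ℤ, C⁻¹ * Λ ^ k.natAbs ≤ σ k) →
        (∀ k : ℤ, σ k ≤ 5 ^ k.natAbs) →
        ∀ n n' : ℕ, 1 / σ (n : ℤ) ≤ lam (-(n' : ℤ)) →
          ((n' : ℝ) ≤ ((n : ℝ) * Real.log 5 + Real.log C') / |Real.log b| ∧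
            σ (n' : ℤ) ≤
              C' * σ (n : ℤ) ^ ((Real.log 5) ^ 2 / (|Real.log b| * Real.log Λ))) ∧
          σ (n : ℤ) * σ (n' : ℤ) ≤
            C' * σ (n : ℤ) ^ (1 + (Real.log 5) ^ 2 / (|Real.log b| * Real.log Λ)) := by
  obtain ⟨hb0, hb1⟩ := hb
  obtain ⟨hΛ1, hΛ5⟩ := hΛ
  have hC0 : 0 < C := by linarith
  have hL : 0 < |Real.log b| := abs_pos.mpr (Real.log_neg hb0 hb1).ne
  have hLb : Real.log b = -|Real.log b| := by
    rw [abs_of_neg (Real.log_neg hb0 hb1)]; ring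
  have hm : 0 < Real.log Λ := Real.log_pos hΛ1
  have hml : Real.log Λ ≤ Real.log 5 := Real.log_le_log (by linarith) hΛ5
  have hc : 0 ≤ Real.log C := Real.log_nonneg hC
  generalize hLdef : |Real.log b| = L at *
  generalize hldef : Real.log 5 = l at *
  generalize hmdef : Real.log Λ = m at *
  generalize hcdef : Real.log C = c at *
  have hl : 0 < l := by linarith
  have hr : 1 ≤ l / m := (one_le_div hm).mpr hml
  have hq : 0 < l / L := div_pos hl hL
  have hexp : l ^ 2 / (L * m) = (l / L) * (l / m) := by field_simp
  rw [hexp]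
  generalize l / m = r at *
  refine ⟨Real.exp (2 * c + (l / L) * ((r + 1) * c)), Real.exp_pos _, ?_⟩
  intro σ lam hσ hlam h1 h2 h3 n n' hn
  have hKpos : 0 ≤ (l / L) * ((r + 1) * c) := by positivity
  have hs1 : Real.log (σ n) ≤ n * l := by
    have := Real.log_le_log (hσ n) (h3 n)
    rwa [Real.log_pow, hldef, Int.natAbs_natCast] at this
  have hs1' : Real.log (σ n') ≤ n' * l := by
    have := Real.log_le_log (hσ n') (h3 n')
    rwa [Real.log_pow, hldef, Int.natAbs_natCast] at this
  have hlow : ∀ k : ℤ, -c ≤ Real.log (σ k) := by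
    intro k
    have h4 : C⁻¹ ≤ σ k := by
      refine le_trans ?_ (h2 k)
      exact le_mul_of_one_le_right (by positivity) (one_le_pow₀ hΛ1.le)
    have := Real.log_le_log (by positivity) h4
    rwa [Real.log_inv, hcdef] at this
  have hlam1 : Real.log (σ (-n')) + Real.log (lam (-n')) ≤ c - n' * L := by
    have := Real.log_le_log (mul_pos (hσ _) (hlam _)) (h1 (-n'))
    rw [Real.log_mul (hσ _).ne' (hlam _).ne', Real.log_mul hC0.ne' (by positivity),
      Real.log_pow, hcdef, Int.natAbs_neg, Int.natAbs_natCast, hLb] at this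
    linarith
  have hlam2 : -Real.log (σ n) ≤ Real.log (lam (-n')) := by
    have := Real.log_le_log (one_div_pos.mpr (hσ _)) hn
    rwa [one_div, Real.log_inv] at this
  have hlown := hlow n
  have hmain : n' * L ≤ 2 * c + Real.log (σ n) := by linarith [hlow (-n')]
  have hb2 : σ n' ≤ Real.exp (2 * c + (l / L) * ((r + 1) * c)) * σ n ^ ((l / L) * r) := by
    rw [Real.rpow_def_of_pos (hσ n), ← Real.exp_add, ← Real.log_le_iff_le_exp (hσ _)]
    have e1 : (n' : ℝ) * l = (l / L) * (n' * L) := by field_simp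
    have e2 : (l / L) * (n' * L) ≤ (l / L) * (2 * c + Real.log (σ n)) :=
      mul_le_mul_of_nonneg_left hmain hq.le
    have e3 : (0:ℝ) ≤ (l / L) * ((r - 1) * (Real.log (σ n) + c)) :=
      mul_nonneg hq.le (mul_nonneg (by linarith) (by linarith))
    linarith
  refine ⟨⟨?_, hb2⟩, ?_⟩
  · rw [Real.log_exp, le_div_iff₀ hL]
    linarith
  · rw [Real.rpow_add (hσ n), Real.rpow_one]
    have := mul_le_mul_of_nonneg_left hb2 (hσ n).le
    linarith
end
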